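/- Let Ω ⊆ ℝ² be open, X : Ω → ℝ³ a smooth immersion with first fundamental form coefficients g₁₁ = ⟨X_u, X_u⟩, g₁₂ = ⟨X_u, X_v⟩, g₂₂ = ⟨X_v, X_v⟩ (subscripts u, v denoting partial derivatives) and unit normal N = (X_u × X_v)/‖X_u × X_v‖. Let R : Ω → ℝ be smooth, ν : Ω → ℝ³ smooth with ‖ν‖ = 1 everywhere, and set ξ = X − R·ν. If ⟨ν, ξ_u⟩ = 0 and ⟨ν, ξ_v⟩ = 0 at every point of Ω, then, writing [A_{ij}] for the inverse of the matrix [g_{ij}], the decomposition ν = a·X_u + b·X_v + c·N satisfies a = A₁₁R_u + A₁₂R_v, b = A₂₁R_u + A₂₂R_v, and c² = 1 − Δ₁R, where Δ₁R = R_u²A₁₁ + 2R_uR_vA₁₂ + R_v²A₂₂. Consequently ξ = X − R(Δ(X,R) ± √(1−Δ₁R)·N), where Δ(X,R) = (R_uA₁₁ + R_vA₁₂)X_u + (R_uA₂₁ + R_vA₂₂)X_v. -/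

import Mathlib

noncomputable section

/-- Euclidean dot product on ℝ³ (as `Fin 3 → ℝ`). -/
def dot3 (a b : Fin 3 → ℝ) : ℝ := a 0 * b 0 + a 1 * b 1 + a 2 * b 2

/-- Euclidean norm on ℝ³. -/
def norm3 (a : Fin 3 → ℝ) : ℝ := Real.sqrt (dot3 a a)

/-- Cross product on ℝ³. -/
def cross3 (a b : Fin 3 → ℝ) : Fin 3 → ℝ :=
  ![a 1 * b 2 - a 2 * b 1, a 2 * b 0 - a 0 * b 2, a 0 * b 1 - a 1 * b 0]

/-!
Differentiating `ξ = X - R ν` and pairing with `ν` kills the term `R ⟨ν, dν⟩`, because `⟨ν, ν⟩ = 1`,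
so tangency `⟨ν, dξ⟩ = 0` says exactly that `⟨ν, dX⟩ = dR`. The tangential part of `ν` is thus the
vector with prescribed products `R_u`, `R_v` against `X_u`, `X_v`, and inverting the Gram matrix of
these gives its coefficients. Pythagoras then leaves `1 - Δ₁R` for the square of the normal
coefficient, which is therefore `±√(1 - Δ₁R)`.
-/

open Matrix
open scoped Topology

section InverseGram

-- `T` holds a frame in its rows: `T * Tᵀ` is the Gram matrix, `a ᵥ* T` the vector with coefficients
-- `a`, and `T *ᵥ n` the list of products of `n` with the frame.
variable {ι κ K : Type*} [Fintype κ] [CommRing K]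

lemma isSymm_mul_transpose (T : Matrix ι κ K) : (T * Tᵀ).IsSymm := by
  rw [IsSymm, transpose_mul, transpose_transpose]

variable [Fintype ι] {T : Matrix ι κ K} {A : Matrix ι ι K} {n w : κ → K} {a : ι → K}

lemma mulVec_vecMul_add_of_mulVec_eq_zero (hw : T *ᵥ w = 0) :
    T *ᵥ (a ᵥ* T + w) = (T * Tᵀ) *ᵥ a := by
  rw [mulVec_add, hw, add_zero, ← mulVec_transpose, mulVec_mulVec]

variable [DecidableEq ι]

lemma isSymm_of_mul_gram_eq_one (hA : A * (T * Tᵀ) = 1) : A.IsSymm := by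
  rw [← inv_eq_left_inv hA]
  exact (isSymm_mul_transpose T).inv

lemma coeff_eq_inverseGram_mulVec (hA : A * (T * Tᵀ) = 1) (hn : n = a ᵥ* T + w)
    (hw : T *ᵥ w = 0) : a = A *ᵥ (T *ᵥ n) := by
  rw [hn, mulVec_vecMul_add_of_mulVec_eq_zero hw, mulVec_mulVec, hA, one_mulVec]

lemma dotProduct_self_eq_inverseGram_add (hA : A * (T * Tᵀ) = 1) (hn : n = a ᵥ* T + w)
    (hw : T *ᵥ w = 0) : n ⬝ᵥ n = T *ᵥ n ⬝ᵥ A *ᵥ (T *ᵥ n) + w ⬝ᵥ w := by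
  have hwn : w ⬝ᵥ n = w ⬝ᵥ w := by
    rw [hn, dotProduct_add, dotProduct_comm w (a ᵥ* T), ← dotProduct_mulVec, hw,
      dotProduct_zero, zero_add]
  calc n ⬝ᵥ n = (a ᵥ* T + w) ⬝ᵥ n := by rw [← hn]
    _ = a ⬝ᵥ T *ᵥ n + w ⬝ᵥ w := by rw [add_dotProduct, ← dotProduct_mulVec, hwn]
    _ = T *ᵥ n ⬝ᵥ A *ᵥ (T *ᵥ n) + w ⬝ᵥ w := by
      rw [← coeff_eq_inverseGram_mulVec hA hn hw, dotProduct_comm a]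

lemma mulVec_sub_inverseGram_vecMul (hA : A * (T * Tᵀ) = 1) (n : κ → K) :
    T *ᵥ (n - (A *ᵥ (T *ᵥ n)) ᵥ* T) = 0 := by
  rw [mulVec_sub, ← mulVec_transpose, mulVec_mulVec, mulVec_mulVec, mul_eq_one_comm.mp hA,
    one_mulVec, sub_self]

end InverseGram

section FinTwo

variable {κ K : Type*} [CommRing K]

lemma pair_dotProduct_mulVec_pair_of_isSymm {A : Matrix (Fin 2) (Fin 2) K} (hA : A.IsSymm)
    (r s : K) :
    ![r, s] ⬝ᵥ A *ᵥ ![r, s] = r ^ 2 * A 0 0 + 2 * r * s * A 0 1 + s ^ 2 * A 1 1 := by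
  rw [mulVec_fin_two, vec2_dotProduct', hA.apply 0 1]
  simp only [cons_val_zero, cons_val_one]
  ring

lemma of_pair_mulVec [Fintype κ] (x y w : κ → K) : of ![x, y] *ᵥ w = ![x ⬝ᵥ w, y ⬝ᵥ w] := by
  ext i
  fin_cases i <;> rfl

lemma vecMul_of_pair (a : Fin 2 → K) (x y : κ → K) :
    a ᵥ* of ![x, y] = a 0 • x + a 1 • y := by
  rw [vecMul_eq_sum, Fin.sum_univ_two]
  rfl

lemma of_pair_mul_transpose [Fintype κ] (x y : κ → K) :
    of ![x, y] * (of ![x, y])ᵀ = !![x ⬝ᵥ x, x ⬝ᵥ y; x ⬝ᵥ y, y ⬝ᵥ y] := by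
  ext i j
  fin_cases i <;> fin_cases j
  exacts [rfl, rfl, dotProduct_comm y x, rfl]

end FinTwo

section CrossProduct

variable {K : Type*} [CommRing K] {x y w : Fin 3 → K}

lemma of_pair_mulVec_cross (x y : Fin 3 → K) : of ![x, y] *ᵥ x ⨯₃ y = 0 := by
  ext i
  fin_cases i
  exacts [dot_self_cross x y, dot_cross_self x y]

lemma det_gram_eq_cross_dotProduct_cross (x y : Fin 3 → K) :
    (of ![x, y] * (of ![x, y])ᵀ).det = x ⨯₃ y ⬝ᵥ x ⨯₃ y := by
  rw [of_pair_mul_transpose, det_fin_two_of, cross_dot_cross, dotProduct_comm y x]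

lemma cross_ne_zero_of_mul_gram_eq_one [Nontrivial K] {A : Matrix (Fin 2) (Fin 2) K}
    (hA : A * (of ![x, y] * (of ![x, y])ᵀ) = 1) : x ⨯₃ y ≠ 0 := by
  intro h
  have hdet := congrArg det hA
  rw [det_mul, det_gram_eq_cross_dotProduct_cross, h, dotProduct_zero, mul_zero, det_one] at hdet
  exact zero_ne_one hdet

lemma cross_cross_eq_zero_of_dotProduct_eq_zero (hx : x ⬝ᵥ w = 0) (hy : y ⬝ᵥ w = 0) :
    x ⨯₃ y ⨯₃ w = 0 := by
  rw [cross_cross_eq_smul_sub_smul, hx, hy, zero_smul, zero_smul, sub_zero]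

lemma eq_dotProduct_smul_of_cross_eq_zero {N : Fin 3 → K} (hN : N ⬝ᵥ N = 1) (hw : N ⨯₃ w = 0) :
    w = (N ⬝ᵥ w) • N := by
  have h := cross_cross_eq_smul_sub_smul' N N w
  rw [hw, map_zero, hN, one_smul] at h
  exact (sub_eq_zero.mp h.symm).symm

end CrossProduct

section UnitNormal

lemma dot3_eq_dotProduct (x y : Fin 3 → ℝ) : dot3 x y = x ⬝ᵥ y :=
  (vec3_dotProduct x y).symm

lemma norm3_eq_one_iff {x : Fin 3 → ℝ} : norm3 x = 1 ↔ x ⬝ᵥ x = 1 := by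
  rw [norm3, Real.sqrt_eq_one, dot3_eq_dotProduct]

lemma norm3_sq (x : Fin 3 → ℝ) : norm3 x ^ 2 = x ⬝ᵥ x := by
  have hnonneg : 0 ≤ x ⬝ᵥ x := dotProduct_self_star_nonneg x
  rw [norm3, dot3_eq_dotProduct, Real.sq_sqrt hnonneg]

/-- The unit normal of the plane spanned by `x` and `y`, oriented by `x × y`. It is `0` when `x` and
`y` are linearly dependent. -/
def unitNormal (x y : Fin 3 → ℝ) : Fin 3 → ℝ :=
  (norm3 (cross3 x y))⁻¹ • cross3 x y

lemma unitNormal_eq_smul_cross (x y : Fin 3 → ℝ) :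
    unitNormal x y = (norm3 (x ⨯₃ y))⁻¹ • x ⨯₃ y := rfl

variable {x y w : Fin 3 → ℝ}

lemma unitNormal_dotProduct_self (h : x ⨯₃ y ≠ 0) : unitNormal x y ⬝ᵥ unitNormal x y = 1 := by
  have hne : norm3 (x ⨯₃ y) ^ 2 ≠ 0 := by
    rwa [norm3_sq, Ne, dotProduct_self_eq_zero]
  rw [unitNormal_eq_smul_cross, smul_dotProduct, dotProduct_smul, smul_smul, smul_eq_mul,
    ← norm3_sq, ← sq, inv_pow, inv_mul_cancel₀ hne]

lemma of_pair_mulVec_smul_unitNormal (x y : Fin 3 → ℝ) (c : ℝ) :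
    of ![x, y] *ᵥ (c • unitNormal x y) = 0 := by
  rw [unitNormal_eq_smul_cross, mulVec_smul, mulVec_smul, of_pair_mulVec_cross, smul_zero,
    smul_zero]

lemma eq_smul_unitNormal_of_of_pair_mulVec_eq_zero (h : x ⨯₃ y ≠ 0)
    (hw : of ![x, y] *ᵥ w = 0) : w = (unitNormal x y ⬝ᵥ w) • unitNormal x y := by
  obtain ⟨hx, hy⟩ : x ⬝ᵥ w = 0 ∧ y ⬝ᵥ w = 0 := by
    rw [of_pair_mulVec] at hw
    exact ⟨congrFun hw 0, congrFun hw 1⟩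
  refine eq_dotProduct_smul_of_cross_eq_zero (unitNormal_dotProduct_self h) ?_
  rw [unitNormal_eq_smul_cross, map_smul, LinearMap.smul_apply,
    cross_cross_eq_zero_of_dotProduct_eq_zero hx hy, smul_zero]

variable {n : Fin 3 → ℝ} {A : Matrix (Fin 2) (Fin 2) ℝ}

lemma sq_normal_coeff_eq (hA : A * (of ![x, y] * (of ![x, y])ᵀ) = 1) (hn : n ⬝ᵥ n = 1)
    {a : Fin 2 → ℝ} {c : ℝ} (h : n = a ᵥ* of ![x, y] + c • unitNormal x y) :
    c ^ 2 = 1 - of ![x, y] *ᵥ n ⬝ᵥ A *ᵥ (of ![x, y] *ᵥ n) := by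
  have hpyth := dotProduct_self_eq_inverseGram_add hA h (of_pair_mulVec_smul_unitNormal x y c)
  have hN := unitNormal_dotProduct_self (cross_ne_zero_of_mul_gram_eq_one hA)
  rw [hn, smul_dotProduct, dotProduct_smul, hN, smul_eq_mul, smul_eq_mul] at hpyth
  linarith

lemma exists_eq_inverseGram_vecMul_add_smul_unitNormal
    (hA : A * (of ![x, y] * (of ![x, y])ᵀ) = 1) (n : Fin 3 → ℝ) :
    ∃ c : ℝ, n = (A *ᵥ (of ![x, y] *ᵥ n)) ᵥ* of ![x, y] + c • unitNormal x y :=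
  ⟨_, sub_eq_iff_eq_add'.mp <| eq_smul_unitNormal_of_of_pair_mulVec_eq_zero
    (cross_ne_zero_of_mul_gram_eq_one hA) (mulVec_sub_inverseGram_vecMul hA n)⟩

end UnitNormal

section Envelope

variable {E κ : Type*} [NormedAddCommGroup E] [NormedSpace ℝ E] [Fintype κ] {p : E}

lemma fderiv_dotProduct_apply {f g : E → κ → ℝ} (hf : DifferentiableAt ℝ f p)
    (hg : DifferentiableAt ℝ g p) (w : E) :
    fderiv ℝ (fun q ↦ f q ⬝ᵥ g q) p w = f p ⬝ᵥ fderiv ℝ g p w + fderiv ℝ f p w ⬝ᵥ g p := by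
  have hsum := HasFDerivAt.fun_sum (u := Finset.univ) fun i _ ↦
    (hasFDerivAt_pi'.mp hf.hasFDerivAt i).mul (hasFDerivAt_pi'.mp hg.hasFDerivAt i)
  have hderiv : fderiv ℝ (fun q ↦ f q ⬝ᵥ g q) p = _ := hsum.fderiv
  rw [hderiv]
  simp [dotProduct, Finset.sum_add_distrib, mul_comm]

lemma dotProduct_fderiv_eq_zero_of_dotProduct_self_eq_const {ν : E → κ → ℝ} {r : ℝ}
    (hν : DifferentiableAt ℝ ν p) (hr : ∀ᶠ q in 𝓝 p, ν q ⬝ᵥ ν q = r) (w : E) :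
    ν p ⬝ᵥ fderiv ℝ ν p w = 0 := by
  have hconst : fderiv ℝ (fun q ↦ ν q ⬝ᵥ ν q) p = 0 := by
    rw [Filter.EventuallyEq.fderiv_eq (f := fun _ ↦ r) hr, fderiv_fun_const, Pi.zero_apply]
  have h := fderiv_dotProduct_apply hν hν w
  rw [hconst, _root_.zero_apply, dotProduct_comm (fderiv ℝ ν p w)] at h
  linarith

lemma dotProduct_fderiv_eq_fderiv_radius {X ν ξ : E → κ → ℝ} {R : E → ℝ} {w : E}
    (hX : DifferentiableAt ℝ X p) (hR : DifferentiableAt ℝ R p) (hν : DifferentiableAt ℝ ν p)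
    (hunit : ∀ᶠ q in 𝓝 p, ν q ⬝ᵥ ν q = 1) (hξ : ∀ᶠ q in 𝓝 p, ξ q = X q - R q • ν q)
    (henv : ν p ⬝ᵥ fderiv ℝ ξ p w = 0) :
    ν p ⬝ᵥ fderiv ℝ X p w = fderiv ℝ R p w := by
  have hdξ : fderiv ℝ ξ p w = fderiv ℝ X p w - (R p • fderiv ℝ ν p w + fderiv ℝ R p w • ν p) := by
    rw [((hX.hasFDerivAt.sub (hR.hasFDerivAt.smul hν.hasFDerivAt)).congr_of_eventuallyEq hξ).fderiv]
    rfl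
  rw [hdξ, dotProduct_sub, dotProduct_add, dotProduct_smul, dotProduct_smul, hunit.self_of_nhds,
    dotProduct_fderiv_eq_zero_of_dotProduct_self_eq_const hν hunit, smul_zero, zero_add,
    smul_eq_mul, mul_one] at henv
  exact sub_eq_zero.mp henv

end Envelope

theorem statement0_general {E : Type*} [NormedAddCommGroup E] [NormedSpace ℝ E]
    {X ν ξ : E → Fin 3 → ℝ} {R : E → ℝ} {p u v : E}
    (hX : DifferentiableAt ℝ X p) (hR : DifferentiableAt ℝ R p) (hν : DifferentiableAt ℝ ν p)
    (hunit : ∀ᶠ q in 𝓝 p, norm3 (ν q) = 1) (hξ : ∀ᶠ q in 𝓝 p, ξ q = X q - R q • ν q)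
    (henv : dot3 (ν p) (fderiv ℝ ξ p u) = 0 ∧ dot3 (ν p) (fderiv ℝ ξ p v) = 0)
    {A : Matrix (Fin 2) (Fin 2) ℝ}
    (hA : A * !![dot3 (fderiv ℝ X p u) (fderiv ℝ X p u), dot3 (fderiv ℝ X p u) (fderiv ℝ X p v);
                 dot3 (fderiv ℝ X p u) (fderiv ℝ X p v), dot3 (fderiv ℝ X p v) (fderiv ℝ X p v)]
      = 1) :
    let Xu := fderiv ℝ X p u
    let Xv := fderiv ℝ X p v
    let N := unitNormal Xu Xv
    let Ru := fderiv ℝ R p u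
    let Rv := fderiv ℝ R p v
    let Δ₁R := Ru ^ 2 * A 0 0 + 2 * Ru * Rv * A 0 1 + Rv ^ 2 * A 1 1
    let ΔXR := (Ru * A 0 0 + Rv * A 0 1) • Xu + (Ru * A 1 0 + Rv * A 1 1) • Xv
    (∀ a b c : ℝ, ν p = a • Xu + b • Xv + c • N →
      a = A 0 0 * Ru + A 0 1 * Rv ∧ b = A 1 0 * Ru + A 1 1 * Rv ∧ c ^ 2 = 1 - Δ₁R) ∧
    (ξ p = X p - R p • (ΔXR + √(1 - Δ₁R) • N) ∨ ξ p = X p - R p • (ΔXR - √(1 - Δ₁R) • N)) := by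
  intro Xu Xv N Ru Rv Δ₁R ΔXR
  simp only [dot3_eq_dotProduct, norm3_eq_one_iff] at hunit henv hA
  rw [← of_pair_mul_transpose] at hA
  have hdR : of ![Xu, Xv] *ᵥ ν p = ![Ru, Rv] := by
    rw [of_pair_mulVec, dotProduct_comm Xu, dotProduct_comm Xv,
      dotProduct_fderiv_eq_fderiv_radius hX hR hν hunit hξ henv.1,
      dotProduct_fderiv_eq_fderiv_radius hX hR hν hunit hξ henv.2]
  have hΔ₁R : ![Ru, Rv] ⬝ᵥ A *ᵥ ![Ru, Rv] = Δ₁R :=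
    pair_dotProduct_mulVec_pair_of_isSymm (isSymm_of_mul_gram_eq_one hA) Ru Rv
  have hΔXR : (A *ᵥ ![Ru, Rv]) ᵥ* of ![Xu, Xv] = ΔXR := by
    simp only [mulVec_fin_two, vecMul_of_pair, cons_val_zero, cons_val_one, mul_comm _ Ru,
      mul_comm _ Rv, ΔXR]
  have hsq {a : Fin 2 → ℝ} {c : ℝ} (h : ν p = a ᵥ* of ![Xu, Xv] + c • N) : c ^ 2 = 1 - Δ₁R := by
    rw [sq_normal_coeff_eq hA hunit.self_of_nhds h, hdR, hΔ₁R]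
  constructor
  · intro a b c h
    replace h : ν p = ![a, b] ᵥ* of ![Xu, Xv] + c • N := by rwa [vecMul_of_pair]
    have hab := coeff_eq_inverseGram_mulVec hA h (of_pair_mulVec_smul_unitNormal Xu Xv c)
    rw [hdR, mulVec_fin_two] at hab
    exact ⟨congrFun hab 0, congrFun hab 1, hsq h⟩
  · obtain ⟨c, hc⟩ := exists_eq_inverseGram_vecMul_add_smul_unitNormal hA (ν p)
    have hsqrt : c = √(1 - Δ₁R) ∨ c = -√(1 - Δ₁R) :=
      eq_or_eq_neg_of_abs_eq (by rw [← hsq hc, Real.sqrt_sq_eq_abs])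
    rw [hdR, hΔXR] at hc
    rw [hξ.self_of_nhds, hc]
    rcases hsqrt with rfl | rfl
    · exact Or.inl rfl
    · right; rw [neg_smul, ← sub_eq_add_neg]

/-- For an envelope `ξ = X − R·ν` of a congruence of spheres `[X, R]`, the decomposition
`ν = a·X_u + b·X_v + c·N` has `a = A₁₁R_u + A₁₂R_v`, `b = A₂₁R_u + A₂₂R_v`,
`c² = 1 − Δ₁R`, and consequently `ξ = X − R(Δ(X,R) ± √(1−Δ₁R)·N)`. -/
theorem statement0 (Ω : Set (ℝ × ℝ)) (hΩ : IsOpen Ω)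
    (X ν : ℝ × ℝ → Fin 3 → ℝ) (R : ℝ × ℝ → ℝ)
    (hX : ContDiffOn ℝ (⊤ : ℕ∞) X Ω) (hR : ContDiffOn ℝ (⊤ : ℕ∞) R Ω) (hν : ContDiffOn ℝ (⊤ : ℕ∞) ν Ω)
    (himm : ∀ p ∈ Ω, LinearIndependent ℝ ![fderiv ℝ X p (1, 0), fderiv ℝ X p (0, 1)])
    (hunit : ∀ p ∈ Ω, norm3 (ν p) = 1)
    (ξ : ℝ × ℝ → Fin 3 → ℝ)
    (hξ : ∀ p, ξ p = X p - R p • ν p)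
    (henv : ∀ p ∈ Ω, dot3 (ν p) (fderiv ℝ ξ p (1, 0)) = 0 ∧
                     dot3 (ν p) (fderiv ℝ ξ p (0, 1)) = 0)
    -- `A` is the pointwise inverse of the first fundamental form matrix `[g_{ij}]`
    (A : ℝ × ℝ → Matrix (Fin 2) (Fin 2) ℝ)
    (hA : ∀ p ∈ Ω,
      A p * !![dot3 (fderiv ℝ X p (1, 0)) (fderiv ℝ X p (1, 0)),
               dot3 (fderiv ℝ X p (1, 0)) (fderiv ℝ X p (0, 1));
               dot3 (fderiv ℝ X p (1, 0)) (fderiv ℝ X p (0, 1)),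
               dot3 (fderiv ℝ X p (0, 1)) (fderiv ℝ X p (0, 1))] = 1) :
    ∀ p ∈ Ω,
      let Xu := fderiv ℝ X p (1, 0)
      let Xv := fderiv ℝ X p (0, 1)
      let N := (norm3 (cross3 Xu Xv))⁻¹ • cross3 Xu Xv
      let Ru := fderiv ℝ R p (1, 0)
      let Rv := fderiv ℝ R p (0, 1)
      let Δ₁R := Ru ^ 2 * A p 0 0 + 2 * Ru * Rv * A p 0 1 + Rv ^ 2 * A p 1 1
      let ΔXR := (Ru * A p 0 0 + Rv * A p 0 1) • Xu + (Ru * A p 1 0 + Rv * A p 1 1) • Xv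
      (∀ a b c : ℝ, ν p = a • Xu + b • Xv + c • N →
        a = A p 0 0 * Ru + A p 0 1 * Rv ∧
        b = A p 1 0 * Ru + A p 1 1 * Rv ∧
        c ^ 2 = 1 - Δ₁R) ∧
      (ξ p = X p - R p • (ΔXR + Real.sqrt (1 - Δ₁R) • N) ∨
       ξ p = X p - R p • (ΔXR - Real.sqrt (1 - Δ₁R) • N)) := by
  intro p hp
  have hp_nhds := hΩ.mem_nhds hp
  exact statement0_general ((hX.contDiffAt hp_nhds).differentiableAt (by simp))
    ((hR.contDiffAt hp_nhds).differentiableAt (by simp))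
    ((hν.contDiffAt hp_nhds).differentiableAt (by simp))
    (Filter.eventually_of_mem hp_nhds hunit) (.of_forall hξ) (henv p hp) (hA p hp)
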